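/- Let d ≥ 1, r ≥ 0, and let B be a bijective filling of D(Z(d,r)) with 1, …, d(d+r). For α in the image of f write b(α) = B(f^{−1}(α)), and for β in the image of f̃ write b̃(β) = B̃(f̃^{−1}(β)) (so b̃(2e_m) = B(d+1−m, 0) and b̃ agrees with b on the image of f). Say x lies between y and z if min(y,z) < x < max(y,z). Then B is a balanced shifted tableau of shape Z(d,r) if and only if all of the following hold: (1) for all 1 ≤ j < k < i ≤ d, b(e_i − e_j) lies between b(e_i − e_k) and b(e_k − e_j); (2) for all 1 ≤ i ≤ d < p ≤ d+r: (a) b(e_i + e_p) < b(e_i + e_q) for all p < q ≤ d+r, and (b) b(e_i + e_p) lies between b(e_i − e_k) and b(e_k + e_p) for all 1 ≤ k < i; (3) for all 1 ≤ i ≤ d: (a) b(e_i) < b(e_i + e_q) for all d < q ≤ d+r, and (b) b(e_i) lies between b(e_i − e_k) and b(e_k) for all 1 ≤ k < i; (4) for all 1 ≤ j < i ≤ d: (a) b(e_i + e_j) < b(e_i + e_q) for all d < q ≤ d+r, (b) b(e_i + e_j) < b(e_j + e_q) for all d < q ≤ d+r, and (c) b(e_i + e_j) lies between b̃(e_i −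 e_k) and b̃(e_j + e_k) for every integer k with −j < k < i (using the conventions e_0 = 0 and e_{−m} = −e_m). -/

import Mathlib

open scoped BigOperators

namespace BST

/-- `lam` (1-indexed, with `d` parts) is a strict partition: strictly decreasing
positive parts `lam 1 > lam 2 > ⋯ > lam d > 0`. -/
def IsStrictPartition (d : ℕ) (lam : ℕ → ℕ) : Prop :=
  (∀ i : ℕ, 1 ≤ i → i < d → lam (i + 1) < lam i) ∧ 1 ≤ lam d

/-- The size `|λ| = λ_1 + ⋯ + λ_d`. -/
def sizeP (d : ℕ) (lam : ℕ → ℕ) : ℕ := ∑ i ∈ Finset.Icc 1 d, lam i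

/-- The shifted diagram `D(λ) ⊆ ℤ × ℤ`: row `i` (1 ≤ i ≤ d) occupies columns
`i - d, …, λ_i + i - d - 1`. -/
def Diagram (d : ℕ) (lam : ℕ → ℕ) : Set (ℤ × ℤ) :=
  {p : ℤ × ℤ | 1 ≤ p.1 ∧ p.1 ≤ (d : ℤ) ∧ p.1 - (d : ℤ) ≤ p.2 ∧
    p.2 + (d : ℤ) + 1 ≤ (lam p.1.toNat : ℤ) + p.1}

/-- The hook `H(i,c)`. -/
def Hook (d : ℕ) (lam : ℕ → ℕ) (i c : ℤ) : Set (ℤ × ℤ) :=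
  {(i, c)} ∪ {p ∈ Diagram d lam | (p.1 = i ∧ c < p.2) ∨ (p.2 = c ∧ i < p.1)} ∪
    {p ∈ Diagram d lam | c < 0 ∧ p.1 = (d : ℤ) + 1 + c}

/-- The extended hook `H̃(i,c)`. -/
def ExtHook (d : ℕ) (lam : ℕ → ℕ) (i c : ℤ) : Set (ℤ × ℤ) :=
  Hook d lam i c ∪ {p : ℤ × ℤ | c < 0 ∧ p = ((d : ℤ) + 1 + c, c)}

/-- The extended diagram `D(λ) ∪ {(i, i - d - 1) : 1 ≤ i ≤ d}`. -/
def ExtDiagram (d : ℕ) (lam : ℕ → ℕ) : Set (ℤ × ℤ) :=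
  Diagram d lam ∪ {p : ℤ × ℤ | 1 ≤ p.1 ∧ p.1 ≤ (d : ℤ) ∧ p.2 = p.1 - ((d : ℤ) + 1)}

/-- The extended filling `B̃`, with `B̃(i, i - d - 1) = B(i, 0)`. -/
def ExtFilling (d : ℕ) (B : ℤ × ℤ → ℕ) : ℤ × ℤ → ℕ :=
  fun p => if p.2 = p.1 - ((d : ℤ) + 1) then B (p.1, 0) else B p

/-- The rank function `rk(i,c)`. -/
def rk (d : ℕ) (lam : ℕ → ℕ) (i c : ℤ) : ℤ :=
  if 0 ≤ c then (lam i.toNat : ℤ) - d + i - c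
  else (lam i.toNat : ℤ) - d + i + (lam ((d : ℤ) + 1 + c).toNat : ℤ) + c + 1

/-- A bijective filling of `D(λ)` with `1, …, |λ|` (normalized to be `0` off the diagram). -/
def IsFilling (d : ℕ) (lam : ℕ → ℕ) (B : ℤ × ℤ → ℕ) : Prop :=
  Set.BijOn B (Diagram d lam) (Set.Icc 1 (sizeP d lam)) ∧
    ∀ p : ℤ × ℤ, p ∉ Diagram d lam → B p = 0

/-- A balanced shifted tableau: a bijective filling such that at each box `(i,c)`,
`B(i,c)` is the `rk(i,c)`-th largest entry of the multiset of values of `B̃` on the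
extended hook, i.e. exactly `rk(i,c) - 1` boxes of the extended hook carry a value
strictly larger than `B(i,c)`. -/
def IsBalanced (d : ℕ) (lam : ℕ → ℕ) (B : ℤ × ℤ → ℕ) : Prop :=
  IsFilling d lam B ∧ ∀ p ∈ Diagram d lam,
    ({q ∈ ExtHook d lam p.1 p.2 | B p < ExtFilling d B q}.ncard : ℤ) =
      rk d lam p.1 p.2 - 1

/-- A standard Young tableau of shifted shape `λ`. -/
def IsSYT (d : ℕ) (lam : ℕ → ℕ) (B : ℤ × ℤ → ℕ) : Prop :=
  IsFilling d lam B ∧ ∀ p ∈ Diagram d lam, ∀ q ∈ Diagram d lam,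
    ((p.1 = q.1 ∧ p.2 < q.2) → B p < B q) ∧ ((p.2 = q.2 ∧ p.1 < q.1) → B p < B q)

/-- The simple reflections of `W(B_n)`, acting on `ℤ`: `s 0` swaps `1 ↔ -1`,
and `s a` (for `a ≥ 1`) swaps `a ↔ a+1` and `-a ↔ -(a+1)`. -/
def sB (a : ℕ) : Equiv.Perm ℤ :=
  if a = 0 then Equiv.swap 1 (-1)
  else Equiv.swap (a : ℤ) ((a : ℤ) + 1) * Equiv.swap (-(a : ℤ)) (-(a : ℤ) - 1)

/-- The product `s_{a_1} s_{a_2} ⋯ s_{a_m}` of a word. -/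
def wordProd (L : List ℕ) : Equiv.Perm ℤ := (L.map sB).prod

/-- A signed permutation in `W(B_n)`: odd, and the identity beyond `n`. -/
def IsSignedPerm (n : ℕ) (w : Equiv.Perm ℤ) : Prop :=
  (∀ i : ℤ, w (-i) = -(w i)) ∧ ∀ i : ℤ, (n : ℤ) < |i| → w i = i

/-- The Coxeter length of `w` in `W(B_n)`. -/
noncomputable def lengthB (n : ℕ) (w : Equiv.Perm ℤ) : ℕ :=
  sInf {m : ℕ | ∃ L : List ℕ, (∀ a ∈ L, a < n) ∧ wordProd L = w ∧ L.length = m}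

/-- `L` is a reduced word of `w` in `W(B_n)`. -/
def IsReducedWord (n : ℕ) (w : Equiv.Perm ℤ) (L : List ℕ) : Prop :=
  (∀ a ∈ L, a < n) ∧ wordProd L = w ∧ L.length = lengthB n w

/-- The vector `e_k` (for `k ≥ 1` the `k`-th standard basis vector, with the
conventions `e 0 = 0` and `e (-k) = - e k`), represented as an odd function `ℤ → ℤ`. -/
def eVec (k : ℤ) : ℤ → ℤ :=
  fun t => if t = 0 then 0 else if t = k then 1 else if t = -k then -1 else 0

/-- The positive roots of type `B_n`. -/
def PosRoots (n : ℕ) : Set (ℤ → ℤ) :=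
  {v | (∃ i j : ℤ, 1 ≤ i ∧ i < j ∧ j ≤ (n : ℤ) ∧
        (v = eVec j - eVec i ∨ v = eVec j + eVec i)) ∨
       (∃ i : ℤ, 1 ≤ i ∧ i ≤ (n : ℤ) ∧ v = eVec i)}

/-- The action of a signed permutation on vectors: `w · e_i = e_{w(i)}`. -/
def actB (w : Equiv.Perm ℤ) (v : ℤ → ℤ) : ℤ → ℤ := fun t => v (w⁻¹ t)

/-- The inversion set `Inv(w) = {α ∈ Φ⁺ : w⁻¹ · α ∈ -Φ⁺}`. -/
def InvSet (n : ℕ) (w : Equiv.Perm ℤ) : Set (ℤ → ℤ) :=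
  {α | α ∈ PosRoots n ∧ -(actB w⁻¹ α) ∈ PosRoots n}

/-- The simple roots: `α_0 = e_1` and `α_a = e_{a+1} - e_a` for `a ≥ 1`. -/
def alphaRoot (a : ℕ) : ℤ → ℤ :=
  if a = 0 then eVec 1 else eVec ((a : ℤ) + 1) - eVec (a : ℤ)

/-- The reflection order of a word: `reflOrder L t = γ_{t+1} = s_{a_1} ⋯ s_{a_t} · α_{a_{t+1}}`
(0-indexed). -/
def reflOrder (L : List ℕ) (t : ℕ) : ℤ → ℤ :=
  actB (wordProd (L.take t)) (alphaRoot (L.getD t 0))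

/-- The trapezoid `Z(d,r) = (r+2d-1, r+2d-3, …, r+1)`. -/
def Zlam (d r : ℕ) : ℕ → ℕ := fun i => r + 2 * d + 1 - 2 * i

/-- The labeling `f : D(Z(d,r)) → Φ⁺`. -/
def fLabel (d r : ℕ) (p : ℤ × ℤ) : ℤ → ℤ :=
  if p.2 ≤ 0 then eVec ((d : ℤ) + 1 - p.1) - eVec p.2
  else if p.2 ≤ (r : ℤ) then eVec ((d : ℤ) + 1 - p.1) + eVec (p.2 + (d : ℤ))
  else eVec ((d : ℤ) + 1 - p.1) - eVec (p.2 - (r : ℤ))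

/-- The extended labeling `f̃`, with `f̃(i, i - d - 1) = 2 e_{d+1-i}`. -/
def fExtLabel (d r : ℕ) (p : ℤ × ℤ) : ℤ → ℤ :=
  if p.2 = p.1 - ((d : ℤ) + 1) then (2 : ℤ) • eVec ((d : ℤ) + 1 - p.1)
  else fLabel d r p

/-- `w` is the signed permutation `w^{(d,r)} ∈ W(B_{d+r})`, i.e.
`w(i) = d + i` for `1 ≤ i ≤ r` and `w(i) = -(i - r)` for `r < i ≤ d + r`. -/
def IsWdr (d r : ℕ) (w : Equiv.Perm ℤ) : Prop :=
  IsSignedPerm (d + r) w ∧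
    (∀ i : ℤ, 1 ≤ i → i ≤ (r : ℤ) → w i = (d : ℤ) + i) ∧
    (∀ i : ℤ, (r : ℤ) < i → i ≤ (d : ℤ) + (r : ℤ) → w i = -(i - r))


/-- `x` lies strictly between `y` and `z` (i.e. `min(y,z) < x < max(y,z)`). -/
def Between (x y z : ℕ) : Prop := (y < x ∧ x < z) ∨ (z < x ∧ x < y)

/-- A nonempty list is unimodal: strictly decreasing down to its minimum
(at 0-indexed position `k`), then strictly increasing. -/
def Unimodal (L : List ℕ) : Prop :=
  ∃ k : ℕ, k < L.length ∧
    (∀ a b : ℕ, a < b → b ≤ k → L.getD b 0 < L.getD a 0) ∧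
    (∀ a b : ℕ, k ≤ a → a < b → b < L.length → L.getD a 0 < L.getD b 0)

/-- Row `i` of the distinguished tableau of shape `Z(d,r)`:
`(r+d-i, …, r+1, 0, 1, …, r+d-i)`. -/
def rowWord (d r i : ℕ) : List ℕ :=
  (List.range (r + 2 * (d - i) + 1)).map fun t =>
    if t < d - i then r + (d - i) - t else t - (d - i)

/-- The reading word `π(T) = T_d T_{d-1} ⋯ T_1` of the distinguished tableau of
shape `Z(d,r)`. -/
def piWord (d r : ℕ) : List ℕ :=
  (List.range d).flatMap fun k => rowWord d r (d - k)

/-- `μ_i = Z(d,r)_i - λ_i`. -/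
def muF (d r : ℕ) (lam : ℕ → ℕ) (i : ℕ) : ℕ := r + 2 * d + 1 - 2 * i - lam i

/-- `σ_i = μ_1 + ⋯ + μ_i`. -/
def sigmaF (d r : ℕ) (lam : ℕ → ℕ) (i : ℕ) : ℕ := ∑ t ∈ Finset.Icc 1 i, muF d r lam t

/-- `ν_i = min{μ_i, …, μ_d}`. -/
noncomputable def nuF (d r : ℕ) (lam : ℕ → ℕ) (i : ℕ) : ℕ :=
  sInf {m : ℕ | ∃ j : ℕ, i ≤ j ∧ j ≤ d ∧ m = muF d r lam j}

/-- The word `a^λ`: the concatenation over `i = 1, …, d` of the increasing runs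
`(d+r-i-μ_i+1, …, d+r-i)`. -/
def aLamWord (d r : ℕ) (lam : ℕ → ℕ) : List ℕ :=
  (List.range d).flatMap fun k =>
    (List.range (muF d r lam (k + 1))).map fun t =>
      d + r - (k + 1) - muF d r lam (k + 1) + 1 + t

/-- Row `i` of the tableau `P(w^λ)`: entries `P(i,c) = c` for `c ≥ 0` and
`P(i,c) = r - c - ν_{d+1+c}` for `c < 0`. -/
noncomputable def rowWordP (d r : ℕ) (lam : ℕ → ℕ) (i : ℕ) : List ℕ :=
  (List.range (lam i)).map fun t =>
    if t < d - i then r + (d - i) - t - nuF d r lam (i + 1 + t) else t - (d - i)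

/-- The reading word `π(P(w^λ))`. -/
noncomputable def piWordP (d r : ℕ) (lam : ℕ → ℕ) : List ℕ :=
  (List.range d).flatMap fun k => rowWordP d r lam (d - k)

/-- The shape obtained from `λ` by adding one box at the end of row `i`. -/
def stepShape (lam : ℕ → ℕ) (i : ℕ) : ℕ → ℕ :=
  fun t => if t = i then lam i + 1 else lam t

/-- The box-adding map `f_i` on fillings: swap columns `j = λ_i + i - d` and `j + 1`
(in rows `1, …, i-1`), and put the value `N + 1` in the new box `(i, j)`. -/
def addBox (d : ℕ) (lam : ℕ → ℕ) (i : ℕ) (N : ℕ) (B : ℤ × ℤ → ℕ) : ℤ × ℤ → ℕ :=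
  fun p =>
    if p = ((i : ℤ), (lam i : ℤ) + (i : ℤ) - (d : ℤ)) then N + 1
    else if 1 ≤ p.1 ∧ p.1 < (i : ℤ) ∧ p.2 = (lam i : ℤ) + (i : ℤ) - (d : ℤ) then
      B (p.1, p.2 + 1)
    else if 1 ≤ p.1 ∧ p.1 < (i : ℤ) ∧ p.2 = (lam i : ℤ) + (i : ℤ) - (d : ℤ) + 1 then
      B (p.1, p.2 - 1)
    else B p

/-- Successively apply the box-adding maps along a list of row indices,
tracking the current shape. -/
def FmapAux (d : ℕ) : List ℕ → (ℕ → ℕ) → (ℤ × ℤ → ℕ) → (ℤ × ℤ → ℕ)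
  | [], _, B => B
  | i :: rest, lam, B => FmapAux d rest (stepShape lam i) (addBox d lam i (sizeP d lam) B)

/-- The shape after successively adding boxes along a list of row indices. -/
def shapeAux : List ℕ → (ℕ → ℕ) → (ℕ → ℕ)
  | [], lam => lam
  | i :: rest, lam => shapeAux rest (stepShape lam i)

/-- The list of row indices `1^{μ_1} 2^{μ_2} ⋯ d^{μ_d}` used to pad `λ` to `Z(d,r)`. -/
def rowsList (d r : ℕ) (lam : ℕ → ℕ) : List ℕ :=
  (List.range d).flatMap fun k => List.replicate (muF d r lam (k + 1)) (k + 1)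

/-- `BS(Z(d,r))|_λ`: balanced tableaux of shape `Z(d,r)` such that for each
`i ∈ {1,…,d}` the entries `N + σ_{i-1} + 1, …, N + σ_i` all occur in row `i`. -/
def BSRestricted (d r : ℕ) (lam : ℕ → ℕ) : Set (ℤ × ℤ → ℕ) :=
  {T | IsBalanced d (Zlam d r) T ∧ ∀ i : ℕ, 1 ≤ i → i ≤ d →
    ∀ k : ℕ, sizeP d lam + sigmaF d r lam (i - 1) + 1 ≤ k →
      k ≤ sizeP d lam + sigmaF d r lam i →
      ∃ c : ℤ, ((i : ℤ), c) ∈ Diagram d (Zlam d r) ∧ T ((i : ℤ), c) = k}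

/-- `w ∈ W(B_n)` pattern embeds the signed pattern `v` (given as its one-line
notation, a list of nonzero integers). -/
def PatternEmbeds (n : ℕ) (w : Equiv.Perm ℤ) (v : List ℤ) : Prop :=
  ∃ idx : Fin v.length → ℤ, StrictMono idx ∧
    (∀ j, 1 ≤ idx j ∧ idx j ≤ (n : ℤ)) ∧
    (∀ j, 0 < w (idx j) ↔ 0 < v.get j) ∧
    (∀ j k, |w (idx j)| < |w (idx k)| ↔ |v.get j| < |v.get k|)


/-!
With signed indices, `e_{-k} = -e_k`, every label of the extended diagram is a difference
`e_a - e_c = e_{-c} - e_{-a}`, also `2 e_a = e_a - e_{-a}`. The extended hook of the box labelled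
`e_i - e_c` consists of that box, of one pair `e_i - e_k`, `e_k - e_c` for each admissible `k`, and
of forced boxes labelled `e_i - e_t` or `e_{-c} - e_t`. The rank minus one is the number of pairs
plus the number of forced boxes. Strong balance says that every forced entry is larger than the
entry `x` of the box and that each pair has exactly one larger member, so it implies balance.

Conversely, go by induction on the antidiagonals. Assume strong balance at all boxes of smaller
depth than a balanced box with entry `x`, and suppose that both members of the pair at `k` exceed
`x`. Strong balance below makes every forced entry larger than `x` too. No pair at `l` can have both
members below `x`: for `k < l` the entry at `e_i - e_k` separates the entries at `e_i - e_l` and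
`e_l - e_k`, and the entry at `e_l - e_c` separates those at `e_l - e_k` and `e_k - e_c`, which puts
the entry at `e_l - e_k` on both sides of `x`; for `l < k` exchange the roles. Then the hook would
have too many larger entries. Hence no pair has two larger members, and the count forces
exactly one in each pair and all forced entries to be larger. For the labels `2 e_a` the
separation property survives only in the weak form `x ∈ uIcc y z`, because `b̃(2 e_a) = b(e_a)`.
-/

section Counting

open Finset

variable {ι κ : Type*} {F : Finset ι} {K : Finset κ} {x : ℕ} {f : ι → ℕ} {y z : κ → ℕ}

theorem card_filter_add_card_filter (s : Finset κ) (p q : κ → Prop) [DecidablePred p]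
    [DecidablePred q] : #{k ∈ s | p k} + #{k ∈ s | q k} =
      #{k ∈ s | p k ∨ q k} + #{k ∈ s | p k ∧ q k} := by
  classical rw [filter_or, filter_and, card_union_add_card_inter]

theorem card_filter_lt_of_between (hF : ∀ s ∈ F, x < f s)
    (hK : ∀ k ∈ K, Between x (y k) (z k)) :
    #{s ∈ F | x < f s} + (#{k ∈ K | x < y k} + #{k ∈ K | x < z k}) = #F + #K := by
  rw [card_filter_add_card_filter, filter_true_of_mem hF, filter_true_of_mem, filter_false_of_mem,
    card_empty, add_zero]
  all_goals
    intro k hk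
    have := hK k hk
    unfold Between at this
    omega

theorem between_of_card_filter_lt (hfx : ∀ s ∈ F, f s ≠ x) (hyx : ∀ k ∈ K, y k ≠ x)
    (hzx : ∀ k ∈ K, z k ≠ x)
    (hcard : #{s ∈ F | x < f s} + (#{k ∈ K | x < y k} + #{k ∈ K | x < z k}) = #F + #K)
    (hhigh : ∀ k ∈ K, x < y k → x < z k → (∀ s ∈ F, x ≤ f s) ∧ ∀ l ∈ K, x ≤ y l ∨ x ≤ z l) :
    (∀ s ∈ F, x < f s) ∧ ∀ k ∈ K, Between x (y k) (z k) := by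
  rw [card_filter_add_card_filter] at hcard
  have no_high : ∀ k ∈ K, ¬(x < y k ∧ x < z k) := by
    rintro k hk ⟨hy, hz⟩
    obtain ⟨hF, hK⟩ := hhigh k hk hy hz
    rw [filter_true_of_mem fun s hs => (hF s hs).lt_of_ne' (hfx s hs),
      filter_true_of_mem fun l hl => (hK l hl).imp (·.lt_of_ne' (hyx l hl))
        (·.lt_of_ne' (hzx l hl))] at hcard
    have : 0 < #{k ∈ K | x < y k ∧ x < z k} := card_pos.2 ⟨k, mem_filter.2 ⟨hk, hy, hz⟩⟩
    omega
  rw [filter_false_of_mem no_high, card_empty, add_zero] at hcard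
  have hF := card_filter_le F (x < f ·)
  have hK := card_filter_le K fun k => x < y k ∨ x < z k
  refine ⟨card_filter_eq_iff.1 (by omega), fun k hk => ?_⟩
  have some_high := card_filter_eq_iff.1 (hK.antisymm (by omega)) k hk
  have := no_high k hk
  have := hyx k hk
  have := hzx k hk
  unfold Between
  omega

end Counting

/-- The pairs `(a, c)` for which `e_a - e_c`, with `e_0 = 0` and `e_{-k} = -e_k`, is a label of
the extended diagram. Both `(a, c)` and `(-c, -a)` may stand for the same label, and `e_i + e_p`
is `e_i - e_{-p}`. -/
def IsLabelIndex (d r : ℕ) (a c : ℤ) : Prop :=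
  c < a ∧ a ≤ d ∧ (-(d : ℤ) ≤ c ∨ -(d + r : ℤ) ≤ c ∧ 0 < a)

/-- The pairs `(i, c)` obtained by reading the labels `e_i - e_c` of `D(Z(d,r))` box by box:
one pair for each box. -/
def IsBoxIndex (d r : ℕ) (i c : ℤ) : Prop :=
  1 ≤ i ∧ i ≤ d ∧ (-i < c ∧ c < i ∨ -(d + r : ℤ) ≤ c ∧ c < -(d : ℤ))

/-- The column of the boxes with label `e_i - e_c` in row `d + 1 - i`. -/
def column (d r : ℕ) (c : ℤ) : ℤ :=
  if c < -(d : ℤ) then -c - d else if c ≤ 0 then c else r + c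

/-- The box of the extended diagram labelled by `e_a - e_c`, found in the row of `e_a` or in that
of `e_{-c}`. -/
def labelBox (d r : ℕ) : ℤ × ℤ → ℤ × ℤ
  | (a, c) =>
    if -a ≤ c ∨ c < -(d : ℤ) then (d + 1 - a, column d r c) else (d + 1 + c, column d r (-a))

/-- The pair `(a, c)` with `f̃(p) = e_a - e_c` read off from the position of the box `p`. -/
def boxIndex (d r : ℕ) (p : ℤ × ℤ) : ℤ × ℤ :=
  (d + 1 - p.1, if p.2 ≤ 0 then p.2 else if p.2 ≤ r then -(p.2 + d) else p.2 - r)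

/-- The number of the antidiagonal of the box `(i, c)`, increasing towards the top left: the hook
of a box consists of the box and of boxes of smaller depth, up to the symmetry
`e_a - e_c = e_{-c} - e_{-a}`. -/
def depth (d r : ℕ) (i c : ℤ) : ℤ := i - column d r c

/-- The `k` for which the hook of `(i, c)` contains the pair `e_i - e_k`, `e_k - e_c` with sum
`e_i - e_c`. If `c = -p` with `d < p`, then `e_k + e_p` is a label only for `k > 0`. -/
noncomputable def splitIndices (d : ℕ) (i c : ℤ) : Finset ℤ :=
  Finset.Ioo (if c < -(d : ℤ) then 0 else c) i

/-- The indices of the remaining boxes in the hook of `(i, c)`, which are the boxes whose entries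
are required to exceed the entry of `(i, c)`. -/
noncomputable def forcedIndices (d r : ℕ) (i c : ℤ) : Finset (ℤ × ℤ) :=
  (if 0 < c then ∅ else if -(d : ℤ) ≤ c ∧ c < 0 then {i, -c} else {i}) ×ˢ
    Finset.Ico (-(d + r : ℤ)) (min c (-d))

/-- All indices of the extended hook of `(i, c)`, except `(i, c)` itself. -/
noncomputable def hookIndices (d r : ℕ) (i c : ℤ) : Finset (ℤ × ℤ) :=
  forcedIndices d r i c ∪ ({i} ×ˢ splitIndices d i c ∪ splitIndices d i c ×ˢ {c})

/-- The value of a function `b` on roots at `e_a - e_c`. -/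
def rootVal (b : (ℤ → ℤ) → ℕ) (a c : ℤ) : ℕ := b (eVec a - eVec c)

/-- The part of the strongly balanced conditions that concerns the box `(i, c)`. -/
structure StronglyBalancedAt (d r : ℕ) (b : (ℤ → ℤ) → ℕ) (i c : ℤ) : Prop where
  lt_forced : ∀ q ∈ forcedIndices d r i c, rootVal b i c < rootVal b q.1 q.2
  between : ∀ k ∈ splitIndices d i c, Between (rootVal b i c) (rootVal b i k) (rootVal b k c)

/-- The strongly balanced conditions at all boxes of depth less than `n`. -/
def StronglyBalancedBelow (d r : ℕ) (b : (ℤ → ℤ) → ℕ) (n : ℤ) : Prop :=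
  ∀ a c, IsBoxIndex d r a c → depth d r a c < n → StronglyBalancedAt d r b a c

/-- The extension rule `b̃(2 e_a) = b(e_a)`. -/
def RespectsDoubling (d : ℕ) (b : (ℤ → ℤ) → ℕ) : Prop :=
  ∀ a : ℤ, 1 ≤ a → a ≤ d → rootVal b a (-a) = rootVal b a 0

theorem eVec_zero : eVec 0 = 0 := by
  funext t
  simp only [eVec, Pi.zero_apply]
  split_ifs <;> omega

theorem eVec_neg (k : ℤ) : eVec (-k) = -eVec k := by
  funext t
  simp only [eVec, Pi.neg_apply]
  split_ifs <;> omega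

theorem rootVal_neg_neg (b : (ℤ → ℤ) → ℕ) (a c : ℤ) : rootVal b (-c) (-a) = rootVal b a c := by
  simp only [rootVal, eVec_neg, neg_sub_neg]

theorem rootVal_zero (b : (ℤ → ℤ) → ℕ) (a : ℤ) : rootVal b a 0 = b (eVec a) := by
  rw [rootVal, eVec_zero, sub_zero]

theorem rootVal_neg (b : (ℤ → ℤ) → ℕ) (a c : ℤ) : rootVal b a (-c) = b (eVec a + eVec c) := by
  rw [rootVal, eVec_neg, sub_neg_eq_add]

section Indices

variable {d r : ℕ} {i c k a t : ℤ}

theorem mem_splitIndices :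
    k ∈ splitIndices d i c ↔ (if c < -(d : ℤ) then 0 else c) < k ∧ k < i := by
  rw [splitIndices, Finset.mem_Ioo]

theorem mem_forcedIndices (h : IsBoxIndex d r i c) :
    (a, t) ∈ forcedIndices d r i c ↔
      c ≤ 0 ∧ (a = i ∨ a = -c) ∧ 1 ≤ a ∧ a ≤ d ∧ -(d + r : ℤ) ≤ t ∧ t < c ∧ t < -d := by
  have ⟨_, _, _⟩ := h
  simp only [forcedIndices, Finset.mem_product, Finset.mem_Ico, lt_min_iff]
  split_ifs <;>
    simp only [Finset.notMem_empty, Finset.mem_insert, Finset.mem_singleton, false_and,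
      false_iff] <;>
    omega

theorem mem_hookIndices :
    (a, t) ∈ hookIndices d r i c ↔ (a, t) ∈ forcedIndices d r i c ∨
      a = i ∧ t ∈ splitIndices d i c ∨ a ∈ splitIndices d i c ∧ t = c := by
  simp only [hookIndices, Finset.mem_union, Finset.mem_product, Finset.mem_singleton]

theorem IsBoxIndex.isLabelIndex (h : IsBoxIndex d r i c) : IsLabelIndex d r i c := by
  unfold IsBoxIndex IsLabelIndex at *
  omega

theorem isLabelIndex_of_mem_hookIndices (h : IsBoxIndex d r i c)
    (hq : (a, t) ∈ hookIndices d r i c) : IsLabelIndex d r a t := by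
  rw [mem_hookIndices, mem_forcedIndices h, mem_splitIndices, mem_splitIndices] at hq
  unfold IsBoxIndex IsLabelIndex at *
  split_ifs at hq <;> omega

theorem card_forcedIndices_add_card_splitIndices (h : IsBoxIndex d r i c) :
    ((forcedIndices d r i c).card : ℤ) + (splitIndices d i c).card =
      rk d (Zlam d r) (d + 1 - i) (column d r c) - 1 := by
  obtain ⟨hi, hid, hc⟩ := h
  have hne : i ≠ -c := by omega
  simp only [forcedIndices, splitIndices, rk, Zlam, column]
  split_ifs <;>
    simp only [Finset.card_product, Finset.card_empty, Finset.card_singleton,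
      Finset.card_pair hne, Int.card_Ico, Int.card_Ioo] <;> omega

end Indices

section Separation

variable {d r : ℕ} {b : (ℤ → ℤ) → ℕ} {n : ℤ}

theorem IsLabelIndex.isBoxIndex_or {a c : ℤ} (h : IsLabelIndex d r a c) :
    IsBoxIndex d r a c ∨ (0 < a ∧ c = -a) ∨ IsBoxIndex d r (-c) (-a) ∧ c < 0 ∧ -(d : ℤ) ≤ c := by
  unfold IsLabelIndex IsBoxIndex at *
  omega

theorem depth_neg_neg_le {a c : ℤ} (hc : c < -a) (hdc : -(d : ℤ) ≤ c) (hca : c < a) :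
    depth d r (-c) (-a) ≤ depth d r a c := by
  unfold depth column
  split_ifs <;> omega

theorem StronglyBalancedBelow.rootVal_zero_mem_uIcc (H : StronglyBalancedBelow d r b n)
    {a m : ℤ} (hm : 0 < m) (hma : m < a) (had : a ≤ d) (hn : 2 * a ≤ n) :
    rootVal b a 0 ∈ Set.uIcc (rootVal b a m) (rootVal b a (-m)) := by
  have hdepth : depth d r a 0 < n ∧ depth d r a (-m) < n := by
    unfold depth column
    split_ifs <;> omega
  have split_zero := (H a 0 (by unfold IsBoxIndex; omega) hdepth.1).between m
    (by rw [mem_splitIndices]; split_ifs <;> omega)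
  have split_neg := (H a (-m) (by unfold IsBoxIndex; omega) hdepth.2).between 0
    (by rw [mem_splitIndices]; split_ifs <;> omega)
  have hswap : rootVal b 0 (-m) = rootVal b m 0 := rootVal_neg_neg b m 0
  rw [hswap] at split_neg
  rw [Set.mem_uIcc]
  unfold Between at split_zero split_neg
  omega

theorem StronglyBalancedBelow.rootVal_neg_self_mem_uIcc (H : StronglyBalancedBelow d r b n)
    (hb : RespectsDoubling d b) {a m : ℤ} (ham : -a < m) (hma : m < a) (had : a ≤ d)
    (hn : 2 * a ≤ n) : rootVal b a (-a) ∈ Set.uIcc (rootVal b a m) (rootVal b m (-a)) := by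
  have hswap := rootVal_neg_neg b a (-m)
  rw [neg_neg] at hswap
  rw [hswap, hb a (by omega) had]
  rcases lt_trichotomy m 0 with hm | rfl | hm
  · have := H.rootVal_zero_mem_uIcc (neg_pos.2 hm) (by omega : -m < a) had hn
    rwa [neg_neg, Set.uIcc_comm] at this
  · exact Set.left_mem_uIcc
  · exact H.rootVal_zero_mem_uIcc hm hma had hn

theorem Between.mem_uIcc {x y z : ℕ} (h : Between x y z) : x ∈ Set.uIcc y z := by
  rw [Set.mem_uIcc]
  unfold Between at h
  omega

theorem StronglyBalancedBelow.rootVal_mem_uIcc (H : StronglyBalancedBelow d r b n)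
    (hb : RespectsDoubling d b) {a c m : ℤ} (hac : IsLabelIndex d r a c)
    (hn : depth d r a c < n) (hm : m ∈ splitIndices d a c) :
    rootVal b a c ∈ Set.uIcc (rootVal b a m) (rootVal b m c) := by
  rcases hac.isBoxIndex_or with hbox | ⟨ha, rfl⟩ | ⟨hbox, hc, hdc⟩
  · exact ((H a c hbox hn).between m hm).mem_uIcc
  · have had : a ≤ d := hac.2.1
    have hnlt : ¬ -a < -(d : ℤ) := by omega
    rw [mem_splitIndices, if_neg hnlt] at hm
    rw [depth, column, if_neg hnlt, if_pos (by omega)] at hn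
    exact H.rootVal_neg_self_mem_uIcc hb hm.1 hm.2 had (by omega)
  · have hca : c < -a := by
      have := hac.2.1
      unfold IsBoxIndex at hbox
      omega
    rw [mem_splitIndices, if_neg hdc.not_gt] at hm
    have := (H (-c) (-a) hbox ((depth_neg_neg_le hca hdc hac.1).trans_lt hn)).between (-m) (by
      have := hac.2.1
      rw [mem_splitIndices, if_neg (by omega)]
      omega)
    simpa only [rootVal_neg_neg, Set.uIcc_comm] using this.mem_uIcc

theorem StronglyBalancedBelow.rootVal_lt (H : StronglyBalancedBelow d r b n)
    (hb : RespectsDoubling d b) {a c t : ℤ} (hac : IsLabelIndex d r a c) (ha : 0 < a)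
    (hc : c ≤ 0) (hn : depth d r a c < n) (hrt : -(d + r : ℤ) ≤ t) (htc : t < c) (htd : t < -d) :
    rootVal b a c < rootVal b a t := by
  have had : a ≤ d := hac.2.1
  rcases hac.isBoxIndex_or with hbox | ⟨-, rfl⟩ | ⟨hbox, -, hdc⟩
  · exact (H a c hbox hn).lt_forced (a, t) ((mem_forcedIndices hbox).2 (by omega))
  · have hbox : IsBoxIndex d r a 0 := by unfold IsBoxIndex; omega
    rw [hb a ha had]
    refine (H a 0 hbox ?_).lt_forced (a, t) ((mem_forcedIndices hbox).2 (by omega))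
    unfold depth column at *
    split_ifs at * <;> omega
  · have hca : c < -a := by
      unfold IsBoxIndex at hbox
      omega
    rw [← rootVal_neg_neg b a c]
    exact (H (-c) (-a) hbox ((depth_neg_neg_le hca hdc hac.1).trans_lt hn)).lt_forced (a, t)
      ((mem_forcedIndices hbox).2 (by omega))

theorem StronglyBalancedBelow.lt_rootVal_of_lt_split {a c k t : ℤ} {x : ℕ}
    (H : StronglyBalancedBelow d r b (depth d r a c)) (hb : RespectsDoubling d b)
    (hac : IsLabelIndex d r a c) (ha : 0 < a) (hc : c ≤ 0) (hk : k ∈ splitIndices d a c)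
    (hxak : x < rootVal b a k) (hxkc : x < rootVal b k c) (hrt : -(d + r : ℤ) ≤ t) (htc : t < c)
    (htd : t < -d) : x < rootVal b a t := by
  rw [mem_splitIndices] at hk
  have had : a ≤ d := hac.2.1
  rcases lt_or_ge 0 k with hk_pos | hk_nonpos
  · have between_at_t := (H a t (by unfold IsBoxIndex; omega) (by
      unfold depth column
      split_ifs <;> omega)).between k (by
      rw [mem_splitIndices, if_pos htd]
      omega)
    have hkt : rootVal b k c < rootVal b k t := H.rootVal_lt hb
      (by unfold IsLabelIndex at *; omega) hk_pos hc (by unfold depth; omega) hrt htc htd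
    unfold Between at between_at_t
    omega
  · have hdc : ¬ c < -(d : ℤ) := fun h => by
      rw [if_pos h] at hk
      omega
    rw [if_neg hdc] at hk
    exact hxak.trans (H.rootVal_lt hb (by unfold IsLabelIndex; omega) ha hk_nonpos (by
      unfold depth column
      split_ifs <;> omega) hrt (by omega) htd)

theorem StronglyBalancedBelow.rootVal_row_mem_uIcc {i c k l : ℤ}
    (H : StronglyBalancedBelow d r b (depth d r i c)) (hb : RespectsDoubling d b)
    (hic : IsLabelIndex d r i c) (hk : k ∈ splitIndices d i c) (hl : l ∈ splitIndices d i c)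
    (hkl : k < l) : rootVal b i k ∈ Set.uIcc (rootVal b i l) (rootVal b l k) := by
  rw [mem_splitIndices] at hk hl
  have hdk : -(d : ℤ) ≤ k := by split_ifs at hk <;> omega
  refine H.rootVal_mem_uIcc hb ?_ ?_ ?_
  · unfold IsLabelIndex at *
    omega
  · unfold IsLabelIndex at hic
    unfold depth column
    split_ifs at * <;> omega
  · rw [mem_splitIndices, if_neg hdk.not_gt]
    omega

theorem StronglyBalancedBelow.rootVal_column_mem_uIcc {i c k l : ℤ}
    (H : StronglyBalancedBelow d r b (depth d r i c)) (hb : RespectsDoubling d b)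
    (hic : IsLabelIndex d r i c) (hk : k ∈ splitIndices d i c) (hl : l ∈ splitIndices d i c)
    (hkl : k < l) : rootVal b l c ∈ Set.uIcc (rootVal b l k) (rootVal b k c) := by
  rw [mem_splitIndices] at hk hl
  refine H.rootVal_mem_uIcc hb ?_ ?_ ?_
  · unfold IsLabelIndex at *
    split_ifs at * <;> omega
  · unfold depth
    omega
  · rw [mem_splitIndices]
    omega

theorem StronglyBalancedBelow.le_or_le_of_lt_split {i c k l : ℤ} {x : ℕ}
    (H : StronglyBalancedBelow d r b (depth d r i c)) (hb : RespectsDoubling d b)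
    (hic : IsLabelIndex d r i c) (hk : k ∈ splitIndices d i c) (hl : l ∈ splitIndices d i c)
    (hxik : x < rootVal b i k) (hxkc : x < rootVal b k c) :
    x ≤ rootVal b i l ∨ x ≤ rootVal b l c := by
  by_contra! hlow
  rcases lt_trichotomy k l with hkl | rfl | hlk
  · have hrow := H.rootVal_row_mem_uIcc hb hic hk hl hkl
    have hcol := H.rootVal_column_mem_uIcc hb hic hk hl hkl
    rw [Set.mem_uIcc] at hrow hcol
    omega
  · omega
  · have hrow := H.rootVal_row_mem_uIcc hb hic hl hk hlk
    have hcol := H.rootVal_column_mem_uIcc hb hic hl hk hlk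
    rw [Set.mem_uIcc] at hrow hcol
    omega

theorem StronglyBalancedBelow.le_of_lt_split {i c k : ℤ}
    (H : StronglyBalancedBelow d r b (depth d r i c)) (hb : RespectsDoubling d b)
    (hic : IsBoxIndex d r i c) (hk : k ∈ splitIndices d i c) {x : ℕ}
    (hxik : x < rootVal b i k) (hxkc : x < rootVal b k c) {q : ℤ × ℤ}
    (hq : q ∈ forcedIndices d r i c) : x ≤ rootVal b q.1 q.2 := by
  obtain ⟨a, t⟩ := q
  obtain ⟨hc, ha, ha_pos, had, hrt, htc, htd⟩ := (mem_forcedIndices hic).1 hq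
  rcases ha with rfl | rfl
  · exact (H.lt_rootVal_of_lt_split hb hic.isLabelIndex ha_pos hc hk hxik hxkc hrt htc htd).le
  · have hid : i ≤ d := hic.2.1
    have hi : 1 ≤ i := hic.1
    have hdepth : depth d r (-c) (-i) = depth d r i c := by
      unfold depth column
      split_ifs <;> omega
    rw [← rootVal_neg_neg] at hxik hxkc
    rw [mem_splitIndices, if_neg (by omega)] at hk
    refine (lt_rootVal_of_lt_split (hdepth ▸ H) hb ?_ ha_pos (by omega) ?_ hxkc hxik hrt
      (by omega) htd).le
    · unfold IsLabelIndex IsBoxIndex at *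
      omega
    · rw [mem_splitIndices, if_neg (by omega)]
      omega

end Separation

section Boxes

variable {d r : ℕ} {i c a t x y : ℤ}

theorem mem_diagram_Zlam : (x, y) ∈ Diagram d (Zlam d r) ↔
    1 ≤ x ∧ x ≤ d ∧ x - d ≤ y ∧ y ≤ r + d - x := by
  simp only [Diagram, Zlam, Set.mem_ofPred_eq]
  omega

theorem mem_extDiagram_Zlam : (x, y) ∈ ExtDiagram d (Zlam d r) ↔
    1 ≤ x ∧ x ≤ d ∧ x - (d + 1) ≤ y ∧ y ≤ r + d - x := by
  simp only [ExtDiagram, Set.mem_union, mem_diagram_Zlam, Set.mem_ofPred_eq]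
  omega

theorem mem_extHook_Zlam : (x, y) ∈ ExtHook d (Zlam d r) a t ↔ (x, y) = (a, t) ∨
    (x, y) ∈ Diagram d (Zlam d r) ∧ (x = a ∧ t < y ∨ y = t ∧ a < x ∨ t < 0 ∧ x = d + 1 + t) ∨
      t < 0 ∧ x = d + 1 + t ∧ y = t := by
  simp only [ExtHook, Hook, Set.mem_union, Set.mem_singleton_iff, Set.mem_ofPred_eq,
    Prod.mk.injEq]
  tauto

theorem IsBoxIndex.labelBox_eq (h : IsBoxIndex d r i c) :
    labelBox d r (i, c) = (d + 1 - i, column d r c) := by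
  rw [labelBox, if_pos]
  unfold IsBoxIndex at h
  omega

theorem IsBoxIndex.labelBox_mem_diagram (h : IsBoxIndex d r i c) :
    labelBox d r (i, c) ∈ Diagram d (Zlam d r) := by
  rw [h.labelBox_eq, mem_diagram_Zlam]
  unfold IsBoxIndex at h
  unfold column
  split_ifs <;> omega

theorem labelBox_boxIndex {p : ℤ × ℤ} (hp : p ∈ ExtDiagram d (Zlam d r)) :
    labelBox d r (boxIndex d r p) = p := by
  obtain ⟨x, y⟩ := p
  rw [mem_extDiagram_Zlam] at hp
  simp only [labelBox, column, boxIndex]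
  split_ifs <;> rw [Prod.mk.injEq] <;> omega

theorem labelBox_neg_neg (had : a ≤ d) (hdc : -(d : ℤ) ≤ c) :
    labelBox d r (-c, -a) = labelBox d r (a, c) := by
  simp only [labelBox, column]
  split_ifs <;> rw [Prod.mk.injEq] <;> omega

theorem IsLabelIndex.boxIndex_labelBox (h : IsLabelIndex d r a c) :
    boxIndex d r (labelBox d r (a, c)) = (a, c) ∨
      boxIndex d r (labelBox d r (a, c)) = (-c, -a) := by
  unfold IsLabelIndex at h
  simp only [labelBox, column, boxIndex]
  split_ifs <;> simp only [Prod.mk.injEq, and_true] <;> omega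

theorem IsLabelIndex.labelBox_mem_extDiagram (h : IsLabelIndex d r a c) :
    labelBox d r (a, c) ∈ ExtDiagram d (Zlam d r) := by
  unfold IsLabelIndex at h
  simp only [labelBox, column]
  split_ifs <;> rw [mem_extDiagram_Zlam] <;> omega

theorem fExtLabel_eq_sub {p : ℤ × ℤ} (hp : p ∈ ExtDiagram d (Zlam d r)) :
    fExtLabel d r p = eVec (boxIndex d r p).1 - eVec (boxIndex d r p).2 := by
  obtain ⟨x, y⟩ := p
  rw [mem_extDiagram_Zlam] at hp
  simp only [fExtLabel, fLabel, boxIndex]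
  split_ifs with hy
  · rw [show y = -(d + 1 - x) by omega, eVec_neg, two_smul, sub_neg_eq_add]
  · omega
  · omega
  · rfl
  · rw [eVec_neg, sub_neg_eq_add]
  · rfl

theorem IsLabelIndex.fExtLabel_labelBox (h : IsLabelIndex d r a c) :
    fExtLabel d r (labelBox d r (a, c)) = eVec a - eVec c := by
  rw [fExtLabel_eq_sub h.labelBox_mem_extDiagram]
  rcases h.boxIndex_labelBox with heq | heq <;> rw [heq]
  rw [eVec_neg, eVec_neg, neg_sub_neg]

theorem exists_isBoxIndex_of_mem_diagram {p : ℤ × ℤ} (hp : p ∈ Diagram d (Zlam d r)) :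
    ∃ i c, IsBoxIndex d r i c ∧ labelBox d r (i, c) = p := by
  refine ⟨_, _, ?_, labelBox_boxIndex (Or.inl hp)⟩
  obtain ⟨x, y⟩ := p
  rw [mem_diagram_Zlam] at hp
  unfold IsBoxIndex
  split_ifs <;> omega

theorem injOn_labelBox (h : IsBoxIndex d r i c) :
    Set.InjOn (labelBox d r) (hookIndices d r i c) := by
  rintro ⟨a, t⟩ hq ⟨a', t'⟩ hq' heq
  rw [Finset.mem_coe] at hq hq'
  have hbox := (isLabelIndex_of_mem_hookIndices h hq).boxIndex_labelBox
  have hbox' := (isLabelIndex_of_mem_hookIndices h hq').boxIndex_labelBox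
  rw [heq] at hbox
  rw [mem_hookIndices, mem_forcedIndices h, mem_splitIndices, mem_splitIndices] at hq hq'
  unfold IsBoxIndex at h
  simp only [Prod.ext_iff] at *
  split_ifs at hq hq' <;> omega

theorem mapsTo_labelBox (h : IsBoxIndex d r i c) :
    Set.MapsTo (labelBox d r) (hookIndices d r i c)
      (ExtHook d (Zlam d r) (d + 1 - i) (column d r c) \ {labelBox d r (i, c)}) := by
  rintro ⟨a, t⟩ hq
  rw [Finset.mem_coe, mem_hookIndices, mem_forcedIndices h, mem_splitIndices,
    mem_splitIndices] at hq
  rw [h.labelBox_eq]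
  unfold IsBoxIndex at h
  simp only [labelBox, column]
  split_ifs at * <;>
    simp only [Set.mem_sdiff, mem_extHook_Zlam, mem_diagram_Zlam, Set.mem_singleton_iff,
      Prod.mk.injEq] <;>
    omega

theorem boxIndex_mem_hookIndices (h : IsBoxIndex d r i c)
    (hmem : (x, y) ∈ ExtHook d (Zlam d r) (d + 1 - i) (column d r c))
    (hne : (x, y) ≠ (d + 1 - i, column d r c)) (hxy : x = d + 1 - i ∨ y = column d r c) :
    boxIndex d r (x, y) ∈ hookIndices d r i c := by
  rw [mem_extHook_Zlam, mem_diagram_Zlam, Prod.mk.injEq] at hmem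
  rw [Ne, Prod.mk.injEq] at hne
  rw [boxIndex, mem_hookIndices, mem_forcedIndices h, mem_splitIndices, mem_splitIndices]
  unfold IsBoxIndex at h
  unfold column at *
  rcases hxy with rfl | rfl
  · split_ifs at * <;> omega
  · split_ifs at * <;> omega

theorem exists_mem_hookIndices_of_row_neg (h : IsBoxIndex d r i c)
    (hmem : (x, y) ∈ ExtHook d (Zlam d r) (d + 1 - i) (column d r c))
    (hx : x ≠ d + 1 - i) (hy : y ≠ column d r c) :
    ∃ q ∈ hookIndices d r i c, labelBox d r q = (x, y) := by
  obtain ⟨hdc, hc, rfl, hcy, hyc⟩ :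
      -(d : ℤ) ≤ c ∧ c < 0 ∧ x = d + 1 + c ∧ c < y ∧ y < r - c := by
    rw [mem_extHook_Zlam, mem_diagram_Zlam, Prod.mk.injEq] at hmem
    unfold IsBoxIndex at h
    unfold column at *
    split_ifs at * <;> omega
  have hext : (d + 1 + c, y) ∈ ExtDiagram d (Zlam d r) := by
    rw [mem_extDiagram_Zlam]
    omega
  have hbox := labelBox_boxIndex hext
  by_cases hyr : 0 < y ∧ y ≤ r
  · refine ⟨_, ?_, hbox⟩
    rw [boxIndex, mem_hookIndices, mem_forcedIndices h]
    unfold IsBoxIndex at h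
    split_ifs <;> omega
  · have htd : -(d : ℤ) ≤ (boxIndex d r (d + 1 + c, y)).2 := by
      simp only [boxIndex]
      split_ifs <;> omega
    refine ⟨_, ?_, (labelBox_neg_neg (show (d + 1 - (d + 1 + c) : ℤ) ≤ d by omega) htd).trans hbox⟩
    simp only [boxIndex, mem_hookIndices, mem_splitIndices]
    unfold IsBoxIndex at h
    unfold column at hy
    split_ifs at * <;> omega

theorem surjOn_labelBox (h : IsBoxIndex d r i c) :
    Set.SurjOn (labelBox d r) (hookIndices d r i c)
      (ExtHook d (Zlam d r) (d + 1 - i) (column d r c) \ {labelBox d r (i, c)}) := by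
  rintro ⟨x, y⟩ ⟨hmem, hne⟩
  rw [h.labelBox_eq, Set.mem_singleton_iff] at hne
  by_cases hxy : x = d + 1 - i ∨ y = column d r c
  · refine ⟨_, boxIndex_mem_hookIndices h hmem hne hxy, labelBox_boxIndex ?_⟩
    rw [mem_extHook_Zlam, mem_diagram_Zlam] at hmem
    rw [mem_extDiagram_Zlam]
    unfold IsBoxIndex at h
    unfold column at *
    rcases hmem with heq | hmem | hmem
    · exact absurd heq hne
    · omega
    · split_ifs at hmem <;> omega
  · rw [not_or] at hxy
    exact exists_mem_hookIndices_of_row_neg h hmem hxy.1 hxy.2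

end Boxes

section Balance

open Finset

variable {d r : ℕ} {B : ℤ × ℤ → ℕ} {b : (ℤ → ℤ) → ℕ}

theorem extFilling_of_mem_diagram {p : ℤ × ℤ} (hp : p ∈ Diagram d (Zlam d r)) :
    ExtFilling d B p = B p := by
  rw [ExtFilling, if_neg]
  have := hp.2.2.1
  omega

theorem IsFilling.extFilling_ne (hB : IsFilling d (Zlam d r) B) {p q : ℤ × ℤ}
    (hp : p ∈ Diagram d (Zlam d r)) (hq : q ∈ ExtHook d (Zlam d r) p.1 p.2) (hne : q ≠ p) :
    ExtFilling d B q ≠ B p := by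
  obtain ⟨x, y⟩ := p
  obtain ⟨x', y'⟩ := q
  by_cases hq_mem : (x', y') ∈ Diagram d (Zlam d r)
  · rw [extFilling_of_mem_diagram hq_mem]
    exact fun heq => hne (hB.1.injOn hq_mem hp heq)
  · obtain ⟨hy, rfl, rfl⟩ : y < 0 ∧ x' = d + 1 + y ∧ y' = y :=
      ((mem_extHook_Zlam.1 hq).resolve_left hne).resolve_left fun h => hq_mem h.1
    rw [ExtFilling, if_pos (by ring)]
    intro heq
    have hp' := mem_diagram_Zlam.1 hp
    have := hB.1.injOn (mem_diagram_Zlam.2 (by omega)) hp heq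
    rw [Prod.mk.injEq] at this
    omega

theorem rootVal_eq_extFilling
    (hb : ∀ p ∈ ExtDiagram d (Zlam d r), b (fExtLabel d r p) = ExtFilling d B p) {a c : ℤ}
    (h : IsLabelIndex d r a c) : rootVal b a c = ExtFilling d B (labelBox d r (a, c)) := by
  rw [rootVal, ← h.fExtLabel_labelBox, hb _ h.labelBox_mem_extDiagram]

theorem respectsDoubling_of_extFilling
    (hb : ∀ p ∈ ExtDiagram d (Zlam d r), b (fExtLabel d r p) = ExtFilling d B p) :
    RespectsDoubling d b := by
  intro a ha had
  have hbox : IsBoxIndex d r a 0 := by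
    unfold IsBoxIndex
    omega
  rw [rootVal_eq_extFilling hb (by unfold IsLabelIndex; omega),
    rootVal_eq_extFilling hb hbox.isLabelIndex,
    extFilling_of_mem_diagram hbox.labelBox_mem_diagram, hbox.labelBox_eq]
  have hcol : ∀ c : ℤ, -(d : ℤ) ≤ c → c ≤ 0 → column d r c = c := fun c hdc hc => by
    rw [column, if_neg hdc.not_gt, if_pos hc]
  rw [labelBox, if_pos (Or.inl le_rfl), hcol _ (by omega) (by omega), hcol _ (by omega) le_rfl,
    ExtFilling, if_pos (by ring)]

/-- The balance condition at the box `(i, c)`, expressed through the number of larger entries at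
the indices in its hook. -/
def IsBalancedAt (d r : ℕ) (b : (ℤ → ℤ) → ℕ) (i c : ℤ) : Prop :=
  #{q ∈ forcedIndices d r i c | rootVal b i c < rootVal b q.1 q.2} +
    (#{k ∈ splitIndices d i c | rootVal b i c < rootVal b i k} +
      #{k ∈ splitIndices d i c | rootVal b i c < rootVal b k c}) =
    #(forcedIndices d r i c) + #(splitIndices d i c)

theorem card_filter_hookIndices {i c : ℤ} (h : IsBoxIndex d r i c) (p : ℤ × ℤ → Prop)
    [DecidablePred p] : #{q ∈ hookIndices d r i c | p q} =
      #{q ∈ forcedIndices d r i c | p q} + (#{k ∈ splitIndices d i c | p (i, k)} +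
        #{k ∈ splitIndices d i c | p (k, c)}) := by
  have disjoint_split : Disjoint ({i} ×ˢ splitIndices d i c) (splitIndices d i c ×ˢ {c}) :=
    disjoint_product.2 (Or.inl (disjoint_singleton_left.2 (by simp [mem_splitIndices])))
  have disjoint_forced : Disjoint (forcedIndices d r i c)
      ({i} ×ˢ splitIndices d i c ∪ splitIndices d i c ×ˢ {c}) := by
    rw [Finset.disjoint_left]
    rintro ⟨a, t⟩ hforced hsplit
    rw [mem_forcedIndices h] at hforced
    simp only [mem_union, mem_product, mem_singleton, mem_splitIndices] at hsplit
    split_ifs at hsplit <;> omega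
  rw [hookIndices, filter_union, card_union_of_disjoint (disjoint_filter_filter disjoint_forced),
    filter_union, card_union_of_disjoint (disjoint_filter_filter disjoint_split)]
  congr 2
  · rw [singleton_product, filter_map, card_map]
    rfl
  · rw [product_singleton, filter_map, card_map]
    rfl

theorem sep_extHook_eq_image
    (hb : ∀ p ∈ ExtDiagram d (Zlam d r), b (fExtLabel d r p) = ExtFilling d B p) {i c : ℤ}
    (h : IsBoxIndex d r i c) :
    {q ∈ ExtHook d (Zlam d r) (labelBox d r (i, c)).1 (labelBox d r (i, c)).2 |
      B (labelBox d r (i, c)) < ExtFilling d B q} =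
    labelBox d r ''
      ({q ∈ hookIndices d r i c | rootVal b i c < rootVal b q.1 q.2} : Finset (ℤ × ℤ)) := by
  have hcenter : rootVal b i c = B (labelBox d r (i, c)) := by
    rw [rootVal_eq_extFilling hb h.isLabelIndex, extFilling_of_mem_diagram h.labelBox_mem_diagram]
  have hval (q) (hq : q ∈ hookIndices d r i c) :
      rootVal b q.1 q.2 = ExtFilling d B (labelBox d r q) :=
    rootVal_eq_extFilling hb (isLabelIndex_of_mem_hookIndices h hq)
  have hext : ExtFilling d B (labelBox d r (i, c)) = B (labelBox d r (i, c)) :=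
    extFilling_of_mem_diagram h.labelBox_mem_diagram
  ext q
  constructor
  · rintro ⟨hq, hlt⟩
    have hne : q ≠ labelBox d r (i, c) := by
      rintro rfl
      exact hlt.ne' hext
    rw [h.labelBox_eq] at hq
    obtain ⟨u, hu, rfl⟩ := surjOn_labelBox h ⟨hq, hne⟩
    exact ⟨u, mem_filter.2 ⟨hu, by rwa [hcenter, hval u hu]⟩, rfl⟩
  · rintro ⟨u, hu, rfl⟩
    obtain ⟨hu, hlt⟩ := mem_filter.1 hu
    exact ⟨h.labelBox_eq ▸ (mapsTo_labelBox h hu).1, by rwa [← hcenter, ← hval u hu]⟩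

theorem ncard_eq_rk_sub_one_iff
    (hb : ∀ p ∈ ExtDiagram d (Zlam d r), b (fExtLabel d r p) = ExtFilling d B p) {i c : ℤ}
    (h : IsBoxIndex d r i c) {p : ℤ × ℤ} (hp : labelBox d r (i, c) = p) :
    ({q ∈ ExtHook d (Zlam d r) p.1 p.2 | B p < ExtFilling d B q}.ncard : ℤ) =
      rk d (Zlam d r) p.1 p.2 - 1 ↔ IsBalancedAt d r b i c := by
  subst hp
  rw [sep_extHook_eq_image hb h,
    ((injOn_labelBox h).mono (coe_subset.2 (filter_subset _ _))).ncard_image,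
    Set.ncard_coe_finset, card_filter_hookIndices h, IsBalancedAt, h.labelBox_eq,
    ← card_forcedIndices_add_card_splitIndices h]
  exact_mod_cast Iff.rfl

theorem StronglyBalancedAt.isBalancedAt {i c : ℤ} (h : StronglyBalancedAt d r b i c) :
    IsBalancedAt d r b i c :=
  card_filter_lt_of_between h.lt_forced h.between

theorem StronglyBalancedBelow.stronglyBalancedAt {i c : ℤ}
    (H : StronglyBalancedBelow d r b (depth d r i c)) (hb : RespectsDoubling d b)
    (h : IsBoxIndex d r i c) (hbal : IsBalancedAt d r b i c)
    (hne : ∀ q ∈ hookIndices d r i c, rootVal b q.1 q.2 ≠ rootVal b i c) :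
    StronglyBalancedAt d r b i c := by
  obtain ⟨hforced, hsplit⟩ := between_of_card_filter_lt
    (fun q hq => hne q (mem_hookIndices.2 (Or.inl hq)))
    (fun k hk => hne (i, k) (mem_hookIndices.2 (Or.inr (Or.inl ⟨rfl, hk⟩))))
    (fun k hk => hne (k, c) (mem_hookIndices.2 (Or.inr (Or.inr ⟨hk, rfl⟩)))) hbal
    fun k hk hik hkc => ⟨fun q hq => H.le_of_lt_split hb h hk hik hkc hq,
      fun l hl => H.le_or_le_of_lt_split hb h.isLabelIndex hk hl hik hkc⟩
  exact ⟨hforced, hsplit⟩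

theorem StronglyBalancedAt.of_isBalancedAt (hb : RespectsDoubling d b)
    (hbal : ∀ i c, IsBoxIndex d r i c → IsBalancedAt d r b i c)
    (hne : ∀ i c, IsBoxIndex d r i c → ∀ q ∈ hookIndices d r i c,
      rootVal b q.1 q.2 ≠ rootVal b i c) {i c : ℤ} (h : IsBoxIndex d r i c) :
    StronglyBalancedAt d r b i c := by
  have hbelow : ∀ n : ℕ, StronglyBalancedBelow d r b (n - r) := by
    intro n
    induction n with
    | zero =>
      intro a t hat hlt
      unfold IsBoxIndex at hat
      unfold depth column at hlt
      split_ifs at hlt <;> omega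
    | succ n ih =>
      intro a t hat hlt
      exact StronglyBalancedBelow.stronglyBalancedAt
        (fun a' t' hat' hlt' => ih a' t' hat' (by omega)) hb hat (hbal a t hat) (hne a t hat)
  exact hbelow (depth d r i c + r + 1).toNat i c h (by omega)

theorem isBalanced_iff_stronglyBalancedAt (hB : IsFilling d (Zlam d r) B)
    (hb : ∀ p ∈ ExtDiagram d (Zlam d r), b (fExtLabel d r p) = ExtFilling d B p) :
    IsBalanced d (Zlam d r) B ↔ ∀ i c, IsBoxIndex d r i c → StronglyBalancedAt d r b i c := by
  have hdouble := respectsDoubling_of_extFilling hb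
  have hne : ∀ i c, IsBoxIndex d r i c → ∀ q ∈ hookIndices d r i c,
      rootVal b q.1 q.2 ≠ rootVal b i c := by
    intro i c h q hq
    obtain ⟨hmem, hne⟩ := mapsTo_labelBox h hq
    rw [rootVal_eq_extFilling hb (isLabelIndex_of_mem_hookIndices h hq),
      rootVal_eq_extFilling hb h.isLabelIndex, extFilling_of_mem_diagram h.labelBox_mem_diagram]
    exact hB.extFilling_ne h.labelBox_mem_diagram (h.labelBox_eq ▸ hmem) hne
  constructor
  · rintro ⟨-, hbal⟩ i c h
    exact .of_isBalancedAt hdouble (fun i c h =>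
      (ncard_eq_rk_sub_one_iff hb h rfl).1 (hbal _ h.labelBox_mem_diagram)) hne h
  · refine fun H => ⟨hB, fun p hp => ?_⟩
    obtain ⟨i, c, h, hic⟩ := exists_isBoxIndex_of_mem_diagram hp
    exact (ncard_eq_rk_sub_one_iff hb h hic).2 (H i c h).isBalancedAt

end Balance

section Conditions

variable {d r : ℕ} {b : (ℤ → ℤ) → ℕ} {i c : ℤ}

theorem stronglyBalancedAt_iff (h : IsBoxIndex d r i c) :
    StronglyBalancedAt d r b i c ↔
      (c ≤ 0 → ∀ q : ℤ, d < q → -c < q → q ≤ d + r →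
        rootVal b i c < rootVal b i (-q) ∧
          (-(d : ℤ) ≤ c → c < 0 → rootVal b i c < rootVal b (-c) (-q))) ∧
      ∀ k, (if c < -(d : ℤ) then 0 else c) < k → k < i →
        Between (rootVal b i c) (rootVal b i k) (rootVal b k c) := by
  have ⟨_, _, _⟩ := h
  constructor
  · refine fun H => ⟨fun hc q hdq hcq hqr => ⟨?_, fun hdc hc => ?_⟩, fun k hk hki =>
      H.between k (mem_splitIndices.2 ⟨hk, hki⟩)⟩
    · exact H.lt_forced (i, -q) ((mem_forcedIndices h).2 (by omega))
    · exact H.lt_forced (-c, -q) ((mem_forcedIndices h).2 (by omega))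
  · rintro ⟨hforced, hsplit⟩
    refine ⟨?_, fun k hk => hsplit k (mem_splitIndices.1 hk).1 (mem_splitIndices.1 hk).2⟩
    rintro ⟨a, t⟩ hat
    obtain ⟨hc, ha, ha_pos, had, hrt, htc, htd⟩ := (mem_forcedIndices h).1 hat
    have := hforced hc (-t) (by omega) (by omega) (by omega)
    rw [neg_neg] at this
    rcases ha with rfl | rfl
    · exact this.1
    · exact this.2 (by omega) (by omega)

theorem stronglyBalancedAt_pos_iff {j : ℤ} (hj : 1 ≤ j) (hji : j < i) (hid : i ≤ d) :
    StronglyBalancedAt d r b i j ↔ ∀ k, j < k → k < i →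
      Between (b (eVec i - eVec j)) (b (eVec i - eVec k)) (b (eVec k - eVec j)) := by
  rw [stronglyBalancedAt_iff (by unfold IsBoxIndex; omega), if_neg (by omega)]
  exact and_iff_right fun hj' => by omega

theorem stronglyBalancedAt_zero_iff (hi : 1 ≤ i) (hid : i ≤ d) :
    StronglyBalancedAt d r b i 0 ↔
      (∀ q : ℤ, d < q → q ≤ d + r → b (eVec i) < b (eVec i + eVec q)) ∧
        ∀ k, 1 ≤ k → k < i → Between (b (eVec i)) (b (eVec i - eVec k)) (b (eVec k)) := by
  rw [stronglyBalancedAt_iff (by unfold IsBoxIndex; omega), if_neg (by omega)]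
  simp only [rootVal_zero, rootVal_neg]
  refine and_congr ⟨fun h q hdq hqr => (h le_rfl q hdq (by omega) hqr).1,
    fun h _ q hdq _ hqr => ⟨h q hdq hqr, by omega⟩⟩ Iff.rfl

theorem stronglyBalancedAt_neg_iff {j : ℤ} (hj : 1 ≤ j) (hji : j < i) (hid : i ≤ d) :
    StronglyBalancedAt d r b i (-j) ↔
      (∀ q : ℤ, d < q → q ≤ d + r → b (eVec i + eVec j) < b (eVec i + eVec q)) ∧
      (∀ q : ℤ, d < q → q ≤ d + r → b (eVec i + eVec j) < b (eVec j + eVec q)) ∧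
      ∀ k, -j < k → k < i →
        Between (b (eVec i + eVec j)) (b (eVec i - eVec k)) (b (eVec j + eVec k)) := by
  rw [stronglyBalancedAt_iff (by unfold IsBoxIndex; omega), if_neg (by omega), ← and_assoc]
  simp only [rootVal_neg, neg_neg, add_comm (eVec j)]
  refine and_congr ⟨fun h => ⟨fun q hdq hqr => ?_, fun q hdq hqr => ?_⟩,
    fun h _ q hdq _ hqr => ⟨h.1 q hdq hqr, fun _ _ => h.2 q hdq hqr⟩⟩ Iff.rfl
  · exact (h (by omega) q hdq (by omega) hqr).1
  · exact (h (by omega) q hdq (by omega) hqr).2 (by omega) (by omega)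

theorem stronglyBalancedAt_neg_iff_of_lt {p : ℤ} (hi : 1 ≤ i) (hid : i ≤ d) (hp : d < p)
    (hpr : p ≤ d + r) :
    StronglyBalancedAt d r b i (-p) ↔
      (∀ q : ℤ, p < q → q ≤ d + r → b (eVec i + eVec p) < b (eVec i + eVec q)) ∧
      ∀ k, 1 ≤ k → k < i →
        Between (b (eVec i + eVec p)) (b (eVec i - eVec k)) (b (eVec k + eVec p)) := by
  rw [stronglyBalancedAt_iff (by unfold IsBoxIndex; omega), if_pos (by omega)]
  simp only [rootVal_neg, neg_neg]
  refine and_congr ⟨fun h q hpq hqr => (h (by omega) q (by omega) hpq hqr).1,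
    fun h _ q _ hpq hqr => ⟨h q hpq hqr, by omega⟩⟩ Iff.rfl

end Conditions

/-- the strongly balanced conditions. A bijective filling `B` of
`D(Z(d,r))` is balanced if and only if the four families of conditions hold,
expressed via any function `btil` with `btil(f̃(x)) = B̃(x)` for all `x` in the
extended diagram. -/
theorem balanced_iff_strongly_balanced (d r : ℕ) (hd : 1 ≤ d)
    (B : ℤ × ℤ → ℕ) (hB : IsFilling d (Zlam d r) B)
    (btil : (ℤ → ℤ) → ℕ)
    (hbtil : ∀ p ∈ ExtDiagram d (Zlam d r), btil (fExtLabel d r p) = ExtFilling d B p) :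
    IsBalanced d (Zlam d r) B ↔
      ((∀ i j k : ℤ, 1 ≤ j → j < k → k < i → i ≤ (d : ℤ) →
          Between (btil (eVec i - eVec j)) (btil (eVec i - eVec k))
            (btil (eVec k - eVec j))) ∧
       (∀ i p : ℤ, 1 ≤ i → i ≤ (d : ℤ) → (d : ℤ) < p → p ≤ (d : ℤ) + (r : ℤ) →
          (∀ q : ℤ, p < q → q ≤ (d : ℤ) + (r : ℤ) →
            btil (eVec i + eVec p) < btil (eVec i + eVec q)) ∧
          (∀ k : ℤ, 1 ≤ k → k < i →
            Between (btil (eVec i + eVec p)) (btil (eVec i - eVec k))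
              (btil (eVec k + eVec p)))) ∧
       (∀ i : ℤ, 1 ≤ i → i ≤ (d : ℤ) →
          (∀ q : ℤ, (d : ℤ) < q → q ≤ (d : ℤ) + (r : ℤ) →
            btil (eVec i) < btil (eVec i + eVec q)) ∧
          (∀ k : ℤ, 1 ≤ k → k < i →
            Between (btil (eVec i)) (btil (eVec i - eVec k)) (btil (eVec k)))) ∧
       (∀ i j : ℤ, 1 ≤ j → j < i → i ≤ (d : ℤ) →
          (∀ q : ℤ, (d : ℤ) < q → q ≤ (d : ℤ) + (r : ℤ) →
            btil (eVec i + eVec j) < btil (eVec i + eVec q)) ∧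
          (∀ q : ℤ, (d : ℤ) < q → q ≤ (d : ℤ) + (r : ℤ) →
            btil (eVec i + eVec j) < btil (eVec j + eVec q)) ∧
          (∀ k : ℤ, -j < k → k < i →
            Between (btil (eVec i + eVec j)) (btil (eVec i - eVec k))
              (btil (eVec j + eVec k))))) := by
  rw [isBalanced_iff_stronglyBalancedAt hB hbtil]
  constructor
  · intro H
    refine ⟨fun i j k hj hjk hki hid => ?_, fun i p hi hid hp hpr => ?_, fun i hi hid => ?_,
      fun i j hj hji hid => ?_⟩
    · exact (stronglyBalancedAt_pos_iff hj (hjk.trans hki) hid).1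
        (H i j (by unfold IsBoxIndex; omega)) k hjk hki
    · exact (stronglyBalancedAt_neg_iff_of_lt hi hid hp hpr).1
        (H i (-p) (by unfold IsBoxIndex; omega))
    · exact (stronglyBalancedAt_zero_iff hi hid).1 (H i 0 (by unfold IsBoxIndex; omega))
    · exact (stronglyBalancedAt_neg_iff hj hji hid).1 (H i (-j) (by unfold IsBoxIndex; omega))
  · rintro ⟨pos, far, zero, neg⟩ i c ⟨hi, hid, hc⟩
    by_cases hcd : c < -(d : ℤ)
    · rw [← neg_neg c, stronglyBalancedAt_neg_iff_of_lt hi hid (by omega) (by omega)]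
      exact far i (-c) hi hid (by omega) (by omega)
    rcases lt_trichotomy c 0 with hc_neg | rfl | hc_pos
    · rw [← neg_neg c, stronglyBalancedAt_neg_iff (by omega) (by omega) hid]
      exact neg i (-c) (by omega) (by omega) hid
    · exact (stronglyBalancedAt_zero_iff hi hid).2 (zero i hi hid)
    · exact (stronglyBalancedAt_pos_iff hc_pos (by omega) hid).2
        fun k hck hki => pos i c k hc_pos hck hki hid

end BST
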